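/- Let X be a standard Borel space, E a countable Borel equivalence relation on X, and ρ : E → (0,∞) a smooth Borel cocycle. Then exactly one of the following holds: (1) there is an injective Borel compression of the quotient of ρ by a finite Borel subequivalence relation of E; (2) there is a ρ-invariant Borel probability measure on X. -/

import Mathlib

open MeasureTheory Set ENNReal

namespace CocycleNadkarni

variable {X : Type*} {Γ : Type*}

/-- The `ρ`-size of `Y` relative to the point `z`: `∑_{y ∈ Y} ρ(y, z)`. -/
noncomputable def eSize (ρ : X → X → ℝ) (Y : Set X) (z : X) : ℝ≥0∞ :=
  ∑' y : Y, ENNReal.ofReal (ρ y z)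

/-- The `ρ`-size of `Y` relative to the set `Z`, computed at the point `z`. -/
noncomputable def relSize (ρ : X → X → ℝ) (Y Z : Set X) (z : X) : ℝ≥0∞ :=
  eSize ρ Y z / eSize ρ Z z

/-- Real-valued `ρ`-size (used for finite sets). -/
noncomputable def rSize (ρ : X → X → ℝ) (Y : Set X) (z : X) : ℝ :=
  ∑' y : Y, ρ y z

/-- `∫_C f dμ^ρ_S`, computed at the point `z`. -/
noncomputable def avgOn (ρ : X → X → ℝ) (f : X → ℝ) (S C : Set X) (z : X) : ℝ :=
  (∑' y : ↥(S ∩ C), f y * ρ y z) / rSize ρ S z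

/-- countable Borel equivalence relation -/
def IsCBER [MeasurableSpace X] (E : X → X → Prop) : Prop :=
  Equivalence E ∧ MeasurableSet {p : X × X | E p.1 p.2} ∧ ∀ x : X, {y | E x y}.Countable

/-- Borel cocycle `ρ : E → (0, ∞)` (as a total function whose values off `E` are irrelevant). -/
def IsCocycle [MeasurableSpace X] (E : X → X → Prop) (ρ : X → X → ℝ) : Prop :=
  Measurable (fun p : X × X => ρ p.1 p.2) ∧
    (∀ ⦃x y : X⦄, E x y → 0 < ρ x y) ∧
    ∀ ⦃x y z : X⦄, E x y → E y z → ρ x z = ρ x y * ρ y z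

/-- Borel cocycle into a group `Γ`. -/
def IsGrpCocycle [MeasurableSpace X] [Group Γ] [MeasurableSpace Γ]
    (E : X → X → Prop) (ρ : X → X → Γ) : Prop :=
  Measurable (fun p : X × X => ρ p.1 p.2) ∧
    ∀ ⦃x y z : X⦄, E x y → E y z → ρ x z = ρ x y * ρ y z

/-- finite Borel subequivalence relation of `E` -/
def IsFinSubequiv [MeasurableSpace X] (E F : X → X → Prop) : Prop :=
  Equivalence F ∧ MeasurableSet {p : X × X | F p.1 p.2} ∧
    (∀ ⦃x y : X⦄, F x y → E x y) ∧ ∀ x : X, {y | F x y}.Finite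

/-- finite Borel subequivalence relation of `E` restricted to `W` (extended by the diagonal). -/
def IsFinSubequivOn [MeasurableSpace X] (E : X → X → Prop) (W : Set X)
    (F : X → X → Prop) : Prop :=
  Equivalence F ∧ MeasurableSet {p : X × X | F p.1 p.2} ∧
    (∀ ⦃x y : X⦄, F x y → x = y ∨ (E x y ∧ x ∈ W ∧ y ∈ W)) ∧ ∀ x : X, {y | F x y}.Finite

/-- `ρ`-invariance of a Borel measure. -/
def IsInvariant [MeasurableSpace X] (E : X → X → Prop) (ρ : X → X → ℝ)
    (μ : Measure X) : Prop :=
  ∀ T : X ≃ᵐ X, (∀ x, E (T x) x) → ∀ B : Set X, MeasurableSet B →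
    μ (T '' B) = ∫⁻ x in B, ENNReal.ofReal (ρ (T x) x) ∂μ

/-- invariance w.r.t. the restriction of `ρ` to a set `R` of pairs, via Borel injections
whose graphs are contained in `R⁻¹`. -/
def IsInvariantRel [MeasurableSpace X] (R : Set (X × X)) (ρ : X → X → ℝ)
    (μ : Measure X) : Prop :=
  ∀ (B : Set X) (T : X → X), MeasurableSet B → Measurable T → Set.InjOn T B →
    (∀ x ∈ B, ((T x, x) : X × X) ∈ R) →
    μ (T '' B) = ∫⁻ x in B, ENNReal.ofReal (ρ (T x) x) ∂μ

/-- a Borel ℕ-coloring of the lacunarity digraph `G^ρ_Z`. -/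
def HasColoring [MeasurableSpace X] (E : X → X → Prop) (ρ : X → X → Γ)
    (Z : Set Γ) : Prop :=
  ∃ c : X → ℕ, Measurable c ∧
    ∀ ⦃x y : X⦄, x ≠ y → E x y → ρ x y ∈ Z → c x ≠ c y

/-- smoothness of the cocycle `ρ` restricted to `E` restricted to `W`. -/
def SmoothOn [MeasurableSpace X] (E : X → X → Prop) (ρ : X → X → ℝ)
    (W : Set X) : Prop :=
  ∃ U : Set ℝ, IsOpen U ∧ (1:ℝ) ∈ U ∧ U ⊆ Set.Ioi 0 ∧
    ∃ c : X → ℕ, Measurable c ∧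
      ∀ ⦃x y : X⦄, x ∈ W → y ∈ W → x ≠ y → E x y → ρ x y ∈ U → c x ≠ c y

/-- smoothness of the cocycle `ρ` on `E`. -/
def Smooth [MeasurableSpace X] (E : X → X → Prop) (ρ : X → X → ℝ) : Prop :=
  SmoothOn E ρ Set.univ

/-- `E`-invariance of a set. -/
def EInvariant (E : X → X → Prop) (B : Set X) : Prop :=
  ∀ ⦃x y : X⦄, E x y → x ∈ B → y ∈ B

/-- a compression of `ρ` over the finite subequivalence relation `F` of `E`. -/
def CompressionOver [MeasurableSpace X] (E F : X → X → Prop) (ρ : X → X → ℝ)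
    (φ : X → X) : Prop :=
  (∀ x, E x (φ x)) ∧
  (∀ x : X, relSize ρ (φ ⁻¹' {y | F y x}) {y | F y x} x ≤ 1) ∧
  (∀ x : X, ∃ y, E x y ∧ relSize ρ (φ ⁻¹' {z | F z y}) {z | F z y} y < 1)

/-- a compression of the quotient of `ρ | E | W` by the finite subequivalence relation given
by the setoid `s`, expressed via representatives. -/
def QuotCompressionOn [MeasurableSpace X] (E : X → X → Prop) (ρ : X → X → ℝ)
    (W : Set X) (s : Setoid X) (φ : Quotient s → Quotient s) : Prop :=
  (∀ ⦃x : X⦄, x ∈ W → ∀ y : X, φ (Quotient.mk s x) = Quotient.mk s y → (E x y ∧ y ∈ W)) ∧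
  (∀ ⦃x : X⦄, x ∈ W →
    relSize ρ {y | y ∈ W ∧ φ (Quotient.mk s y) = Quotient.mk s x} {y | s.r y x} x ≤ 1) ∧
  (∀ ⦃x : X⦄, x ∈ W → ∃ y, y ∈ W ∧ E x y ∧
    relSize ρ {z | z ∈ W ∧ φ (Quotient.mk s z) = Quotient.mk s y} {z | s.r z y} y < 1)


/-- `B` has `ρ`-density at least `ε` relative to `W`. -/
def HasDensityAtLeastOn [MeasurableSpace X] (E : X → X → Prop) (ρ : X → X → ℝ)
    (B W : Set X) (ε : ℝ) : Prop :=
  ∃ F : X → X → Prop, IsFinSubequivOn E W F ∧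
    ∀ x ∈ W, ENNReal.ofReal ε ≤ relSize ρ (B ∩ {y | F y x}) {y | F y x} x

/-- `B` has positive `ρ`-density relative to `W`. -/
def HasPosDensityOn [MeasurableSpace X] (E : X → X → Prop) (ρ : X → X → ℝ)
    (B W : Set X) : Prop :=
  ∃ ε : ℝ, 0 < ε ∧ HasDensityAtLeastOn E ρ B W ε

/-- `B` has σ-positive `ρ`-density relative to `W`. -/
def HasSigmaPosDensityOn [MeasurableSpace X] (E : X → X → Prop) (ρ : X → X → ℝ)
    (B W : Set X) : Prop :=
  ∃ A : ℕ → Set X, (∀ n, MeasurableSet (A n)) ∧ (∀ n, A n ⊆ W) ∧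
    (∀ n, ∀ x ∈ A n, ∀ y ∈ W, E x y → y ∈ A n) ∧ W = ⋃ n, A n ∧
    ∀ n, HasPosDensityOn E ρ (B ∩ A n) (A n)

/-!
Let `c` be a countable colouring for which distinct `E`-related points `x`, `y` of the same colour
satisfy `|log ρ(x, y)| ≥ δ > 0`. It makes `E` the union of countably many Borel graphs of functions,
hence of countably many Borel involutions.

If `μ` is a finite invariant measure and `φ` a compression, let every point spread a unit mass over
the image of its class, proportionally to `ρ`. By invariance the average mass received equals the
average mass sent, so almost every class receives exactly its own size; as the classes receiving
less meet every `E`-class, `μ = 0`. Hence the two alternatives exclude each other.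

If some `E`-class has finite `ρ`-size, normalising `ρ` on it gives an invariant probability measure.
Otherwise all classes have infinite size, and a compression is built on two invariant sets. Where no
colour has a `ρ`-largest point in its class, sending each point to the next larger one of its colour
is an injection that strictly increases `ρ`. Where some colour has a largest point, the one of the
least such colour is a Borel base point. From it the class is enumerated by colour and the
`δ`-interval containing `log ρ`, then cut into finite blocks, each larger than all the preceding
ones together. These blocks are the classes of `F`, and each block is sent to the next.
-/

section Cocycles

variable [MeasurableSpace X] {E : X → X → Prop} {ρ : X → X → ℝ} {x y z : X}

lemma IsCBER.refl (hE : IsCBER E) (x : X) : E x x := hE.1.refl x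

lemma IsCBER.symm (hE : IsCBER E) (h : E x y) : E y x := hE.1.symm h

lemma IsCBER.trans (hE : IsCBER E) (hxy : E x y) (hyz : E y z) : E x z := hE.1.trans hxy hyz

lemma IsCocycle.measurable_comp (hρ : IsCocycle E ρ) {α : Type*} [MeasurableSpace α] {f g : α → X}
    (hf : Measurable f) (hg : Measurable g) : Measurable fun a => ρ (f a) (g a) :=
  hρ.1.comp (hf.prodMk hg)

lemma IsCocycle.pos (hρ : IsCocycle E ρ) (h : E x y) : 0 < ρ x y := hρ.2.1 h

lemma IsCocycle.mul (hρ : IsCocycle E ρ) (hxy : E x y) (hyz : E y z) :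
    ρ x y * ρ y z = ρ x z := (hρ.2.2 hxy hyz).symm

lemma IsCocycle.self (hρ : IsCocycle E ρ) (h : E x x) : ρ x x = 1 :=
  mul_eq_left₀ (hρ.pos h).ne' |>.1 (hρ.mul h h)

lemma IsCocycle.ofReal_mul (hρ : IsCocycle E ρ) (hxy : E x y) (hyz : E y z) :
    ENNReal.ofReal (ρ x y) * ENNReal.ofReal (ρ y z) = ENNReal.ofReal (ρ x z) := by
  rw [← ENNReal.ofReal_mul (hρ.pos hxy).le, hρ.mul hxy hyz]

lemma IsCocycle.ofReal_mul_symm (hE : IsCBER E) (hρ : IsCocycle E ρ) (h : E x y) :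
    ENNReal.ofReal (ρ x y) * ENNReal.ofReal (ρ y x) = 1 := by
  rw [hρ.ofReal_mul h (hE.symm h), hρ.self (hE.refl x), ENNReal.ofReal_one]

end Cocycles

section Size

variable {ρ : X → X → ℝ} {Y Z : Set X} {x y z : X}

lemma eSize_eq_tsum_indicator :
    eSize ρ Y z = ∑' y, Y.indicator (fun y => ENNReal.ofReal (ρ y z)) y :=
  tsum_subtype Y fun y => ENNReal.ofReal (ρ y z)

lemma eSize_mono (h : Y ⊆ Z) (z : X) : eSize ρ Y z ≤ eSize ρ Z z :=
  ENNReal.tsum_mono_subtype (fun y => ENNReal.ofReal (ρ y z)) h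

lemma eSize_union (h : Disjoint Y Z) (z : X) :
    eSize ρ (Y ∪ Z) z = eSize ρ Y z + eSize ρ Z z :=
  ENNReal.summable.tsum_union_disjoint (f := fun y => ENNReal.ofReal (ρ y z)) h ENNReal.summable

lemma eSize_empty (z : X) : eSize ρ ∅ z = 0 := tsum_empty

lemma eSize_singleton (y z : X) : eSize ρ {y} z = ENNReal.ofReal (ρ y z) :=
  tsum_singleton y fun y => ENNReal.ofReal (ρ y z)

lemma eSize_ne_top (hY : Y.Finite) (z : X) : eSize ρ Y z ≠ ⊤ := by
  have := hY.fintype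
  rw [eSize, tsum_fintype]
  exact ENNReal.sum_ne_top.2 fun y _ => ENNReal.ofReal_ne_top

lemma eSize_ne_zero (hy : y ∈ Y) (h : 0 < ρ y z) : eSize ρ Y z ≠ 0 := by
  have hle := eSize_mono (ρ := ρ) (singleton_subset_iff.2 hy) z
  rw [eSize_singleton] at hle
  exact ((ENNReal.ofReal_pos.2 h).trans_le hle).ne'

lemma eSize_inter_eq_tsum_subtype :
    eSize ρ (Z ∩ Y) z = ∑' y : Z, Y.indicator (fun y => ENNReal.ofReal (ρ y z)) y := by
  rw [tsum_subtype Z (Y.indicator fun y => ENNReal.ofReal (ρ y z)), indicator_indicator,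
    eSize_eq_tsum_indicator]

lemma IsCocycle.eSize_mul [MeasurableSpace X] {E : X → X → Prop} (hρ : IsCocycle E ρ)
    (hY : ∀ y ∈ Y, E y x) (hxz : E x z) :
    eSize ρ Y x * ENNReal.ofReal (ρ x z) = eSize ρ Y z := by
  rw [eSize, eSize, ← ENNReal.tsum_mul_right]
  exact tsum_congr fun y => hρ.ofReal_mul (hY y y.2) hxz

end Size

section Lacunarity

/-- `c` colours the points so that distinct `E`-related points of the same colour have
`|log ρ| ≥ δ`: the additive form of a countable colouring of a lacunarity digraph. -/
structure IsLacunaryColoring [MeasurableSpace X] (E : X → X → Prop) (ρ : X → X → ℝ) (c : X → ℕ)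
    (δ : ℝ) : Prop where
  measurable : Measurable c
  pos : 0 < δ
  eq_of_abs_log_lt : ∀ ⦃x y⦄, E x y → c x = c y → |Real.log (ρ x y)| < δ → x = y

variable [MeasurableSpace X] {E : X → X → Prop} {ρ : X → X → ℝ} {c : X → ℕ} {δ : ℝ}

lemma Smooth.exists_isLacunaryColoring (hρ : IsCocycle E ρ) (hsm : Smooth E ρ) :
    ∃ c δ, IsLacunaryColoring E ρ c δ := by
  obtain ⟨U, hU, hU1, -, c, hc, hcol⟩ := hsm
  have hnhds : Real.exp ⁻¹' U ∈ nhds (0 : ℝ) :=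
    Real.continuous_exp.continuousAt (by simpa using hU.mem_nhds hU1)
  obtain ⟨δ, hδ, hball⟩ := Metric.mem_nhds_iff.1 hnhds
  refine ⟨c, δ, hc, hδ, fun x y hxy hcxy hlog => ?_⟩
  by_contra hne
  have hexp : Real.exp (Real.log (ρ x y)) ∈ U := hball (by simpa using hlog)
  exact hcol (mem_univ x) (mem_univ y) hne hxy (Real.exp_log (hρ.pos hxy) ▸ hexp) hcxy

/-- The position of `y` as seen from `x`: its colour and the length-`δ` interval containing
`log ρ(y, x)`. For a lacunary colouring it determines `y` within the class of `x`. -/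
noncomputable def address (ρ : X → X → ℝ) (c : X → ℕ) (δ : ℝ) (x y : X) : ℕ × ℤ :=
  (c y, ⌊Real.log (ρ y x) / δ⌋)

namespace IsLacunaryColoring

lemma measurable_address (hc : IsLacunaryColoring E ρ c δ) (hρ : IsCocycle E ρ) :
    Measurable fun p : X × X => address ρ c δ p.1 p.2 := by
  have hlog : Measurable fun p : X × X => Real.log (ρ p.2 p.1) :=
    (hρ.measurable_comp measurable_snd measurable_fst).log
  exact (hc.measurable.comp measurable_snd).prodMk (hlog.div_const δ).floor

lemma injOn_address (hc : IsLacunaryColoring E ρ c δ) (hE : IsCBER E) (hρ : IsCocycle E ρ)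
    (x : X) : InjOn (address ρ c δ x) {y | E x y} := by
  intro y (hy : E x y) z (hz : E x z) h
  obtain ⟨hcol, hfloor⟩ := Prod.mk.inj h
  have hyz : E y z := hE.trans (hE.symm hy) hz
  refine hc.eq_of_abs_log_lt hyz hcol ?_
  have hlog : Real.log (ρ y z) = Real.log (ρ y x) - Real.log (ρ z x) := by
    rw [← hρ.mul hyz (hE.symm hz),
      Real.log_mul (hρ.pos hyz).ne' (hρ.pos (hE.symm hz)).ne', add_sub_cancel_right]
  have habs := Int.abs_sub_lt_one_of_floor_eq_floor hfloor
  rwa [← sub_div, ← hlog, abs_div, abs_of_pos hc.pos, div_lt_one hc.pos] at habs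

end IsLacunaryColoring

end Lacunarity

section Uniformization

lemma exists_measurable_of_injOn_fst {Y : Type*} [MeasurableSpace X] [StandardBorelSpace X]
    [MeasurableSpace Y] [StandardBorelSpace Y] {P : Set (X × Y)} (hP : MeasurableSet P)
    (hinj : InjOn Prod.fst P) {g : X → Y} (hg : Measurable g) :
    ∃ f : X → Y, Measurable f ∧ (∀ p ∈ P, f p.1 = p.2) ∧ ∀ x, (x, f x) ∈ P ∨ f x = g x := by
  have := hP.standardBorel
  have hemb : MeasurableEmbedding fun p : P => p.1.1 :=
    (measurable_fst.comp measurable_subtype_coe).measurableEmbedding hinj.injective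
  refine ⟨Function.extend (fun p : P => p.1.1) (fun p => p.1.2) g,
    hemb.measurable_extend (measurable_snd.comp measurable_subtype_coe) hg,
    fun p hp => hemb.injective.extend_apply _ _ ⟨p, hp⟩, fun x => ?_⟩
  by_cases hx : ∃ p : P, p.1.1 = x
  · obtain ⟨p, rfl⟩ := hx
    left
    rw [hemb.injective.extend_apply]
    exact p.2
  · exact Or.inr (Function.extend_apply' _ _ _ hx)

variable [MeasurableSpace X] [StandardBorelSpace X] {E : X → X → Prop} {ρ : X → X → ℝ}
  {c : X → ℕ} {δ : ℝ}

lemma IsLacunaryColoring.exists_enumeration (hc : IsLacunaryColoring E ρ c δ) (hE : IsCBER E)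
    (hρ : IsCocycle E ρ) :
    ∃ h : ℕ × ℤ → X → X, (∀ i, Measurable (h i)) ∧ (∀ i x, E x (h i x)) ∧
      ∀ x y, E x y → ∃ i, h i x = y := by
  have hsection (i : ℕ × ℤ) : ∃ f : X → X, Measurable f ∧ (∀ x, E x (f x)) ∧
      ∀ x y, E x y → address ρ c δ x y = i → f x = y := by
    have hP : MeasurableSet {p : X × X | E p.1 p.2 ∧ address ρ c δ p.1 p.2 = i} :=
      hE.2.1.inter (hc.measurable_address hρ (measurableSet_singleton i))
    obtain ⟨f, hf, hfP, hfE⟩ := exists_measurable_of_injOn_fst hP (by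
      rintro ⟨x, y⟩ ⟨hy, hyi⟩ ⟨x', z⟩ ⟨hz, hzi⟩ (rfl : x = x')
      exact Prod.ext rfl (hc.injOn_address hE hρ x hy hz (hyi.trans hzi.symm))) measurable_id
    refine ⟨f, hf, fun x => ?_, fun x y hxy hi => hfP (x, y) ⟨hxy, hi⟩⟩
    rcases hfE x with hx | hx
    · exact hx.1
    · rw [hx]
      exact hE.refl x
  choose h hmeas hgraph hcover using hsection
  exact ⟨h, hmeas, hgraph, fun x y hxy => ⟨_, hcover _ x y hxy rfl⟩⟩

end Uniformization

section FeldmanMoore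

/-- A sequence of Borel involutions witnessing the Feldman–Moore theorem for `E`: their graphs
cover `E`. -/
structure IsFeldmanMoore [MeasurableSpace X] (E : X → X → Prop) (T : ℕ → X ≃ᵐ X) : Prop where
  involutive : ∀ n, Function.Involutive (T n)
  rel : ∀ n x, E x (T n x)
  exists_eq : ∀ ⦃x y⦄, E x y → ∃ n, T n x = y

lemma exists_involutive_measurableEquiv_eqOn [MeasurableSpace X] [MeasurableEq X] {f g : X → X}
    {D : Set X} (hf : Measurable f) (hg : Measurable g) (hD : MeasurableSet D)
    (hgf : LeftInvOn g f D) (hfD : MapsTo f D Dᶜ) :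
    ∃ T : X ≃ᵐ X, Function.Involutive T ∧ EqOn T f D ∧ ∀ x, T x = f x ∨ T x = g x ∨ T x = x := by
  classical
  have hR : MeasurableSet {x | g x ∈ D ∧ f (g x) = x} :=
    (hg hD).inter (measurableSet_eq_fun (hf.comp hg) measurable_id)
  let T : X → X := fun x => if x ∈ D then f x else if g x ∈ D ∧ f (g x) = x then g x else x
  have hTmeas : Measurable T := hf.ite hD (hg.ite hR measurable_id)
  have hTD : EqOn T f D := fun x hx => if_pos hx
  have hTR (x : X) (hx : g x ∈ D ∧ f (g x) = x) : T x = g x := by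
    have hxD : x ∉ D := hx.2 ▸ hfD hx.1
    simp only [T, hxD, hx, and_self, if_true, if_false]
  have hTelse (x : X) (hxD : x ∉ D) (hxR : ¬ (g x ∈ D ∧ f (g x) = x)) : T x = x :=
    (if_neg hxD).trans (if_neg hxR)
  have hTinv : Function.Involutive T := by
    intro x
    by_cases hxD : x ∈ D
    · rw [hTD hxD, hTR, hgf hxD]
      rw [hgf hxD]
      exact ⟨hxD, rfl⟩
    by_cases hxR : g x ∈ D ∧ f (g x) = x
    · rw [hTR x hxR, hTD hxR.1, hxR.2]
    · rw [hTelse x hxD hxR, hTelse x hxD hxR]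
  refine ⟨⟨hTinv.toPerm, hTmeas, hTmeas⟩, hTinv, hTD, fun x => ?_⟩
  by_cases hxD : x ∈ D
  · exact Or.inl (hTD hxD)
  by_cases hxR : g x ∈ D ∧ f (g x) = x
  · exact Or.inr (Or.inl (hTR x hxR))
  · exact Or.inr (Or.inr (hTelse x hxD hxR))

lemma IsCBER.exists_isFeldmanMoore_of_involutions [MeasurableSpace X] {ι : Type*} [Countable ι]
    {E : X → X → Prop} (hE : IsCBER E) {S : ι → X ≃ᵐ X} (hinv : ∀ i, Function.Involutive (S i))
    (hrel : ∀ i x, E x (S i x)) (hcover : ∀ x y, E x y → x ≠ y → ∃ i, S i x = y) :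
    ∃ T, IsFeldmanMoore E T := by
  obtain ⟨s, hs⟩ := exists_surjective_nat (Option ι)
  refine ⟨fun n => (s n).elim (MeasurableEquiv.refl X) S, fun n => ?_, fun n x => ?_,
    fun x y hxy => ?_⟩
  · cases s n with
    | none => exact fun x => rfl
    | some i => exact hinv i
  · cases s n with
    | none => exact hE.refl x
    | some i => exact hrel i x
  suffices hex : ∃ i : Option ι, i.elim (MeasurableEquiv.refl X) S x = y by
    obtain ⟨i, hi⟩ := hex
    obtain ⟨n, rfl⟩ := hs i
    exact ⟨n, hi⟩
  by_cases hne : x = y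
  · exact ⟨none, hne⟩
  · exact (hcover x y hxy hne).imp' some fun _ => id

lemma IsCBER.exists_isFeldmanMoore_of_enumeration [MeasurableSpace X] [MeasurableEq X]
    [MeasurableSpace.CountablySeparated X] {ι : Type*} [Countable ι] {E : X → X → Prop}
    (hE : IsCBER E) {h : ι → X → X} (hmeas : ∀ i, Measurable (h i)) (hrel : ∀ i x, E x (h i x))
    (hcover : ∀ x y, E x y → ∃ i, h i x = y) : ∃ T, IsFeldmanMoore E T := by
  obtain ⟨b, hb, hbinj⟩ := MeasurableSpace.measurable_injection_nat_bool_of_countablySeparated X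
  have hbmeas (n : ℕ) (v : Bool) : MeasurableSet {x | b x n = v} :=
    (measurable_pi_iff.1 hb n) (measurableSet_singleton v)
  let D : ι × ι × ℕ → Set X := fun a =>
    {x | h a.2.1 (h a.1 x) = x ∧ b x a.2.2 = false ∧ b (h a.1 x) a.2.2 = true}
  have hD (a) : MeasurableSet (D a) :=
    (measurableSet_eq_fun ((hmeas a.2.1).comp (hmeas a.1)) measurable_id).inter
      ((hbmeas a.2.2 false).inter (hmeas a.1 (hbmeas a.2.2 true)))
  have hswap (a) : MapsTo (h a.1) (D a) (D a)ᶜ := fun x hx hx' =>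
    Bool.false_ne_true (hx'.2.1.symm.trans hx.2.2)
  choose S hSinv hSD hS using fun a =>
    exists_involutive_measurableEquiv_eqOn (hmeas a.1) (hmeas a.2.1) (hD a) (fun x hx => hx.1)
      (hswap a)
  have hSrel (a x) : E x (S a x) := by
    rcases hS a x with hx | hx | hx <;> rw [hx]
    exacts [hrel _ x, hrel _ x, hE.refl x]
  have hSeq {x y : X} {n : ℕ} (hxy : E x y) (hx : b x n = false) (hy : b y n = true) :
      ∃ a, S a x = y := by
    obtain ⟨i, rfl⟩ := hcover x y hxy
    obtain ⟨j, hj⟩ := hcover _ x (hE.symm hxy)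
    exact ⟨(i, j, n), hSD (i, j, n) ⟨hj, hx, hy⟩⟩
  refine hE.exists_isFeldmanMoore_of_involutions hSinv hSrel fun x y hxy hne => ?_
  obtain ⟨n, hn⟩ := Function.ne_iff.1 (hbinj.ne hne)
  cases hxn : b x n with
  | false =>
    exact hSeq hxy hxn (Bool.eq_true_of_not_eq_false fun h => hn (hxn.trans h.symm))
  | true =>
    obtain ⟨a, rfl⟩ := hSeq (hE.symm hxy)
      (Bool.eq_false_of_not_eq_true fun h => hn (hxn.trans h.symm)) hxn
    exact ⟨a, hSinv a y⟩

end FeldmanMoore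

section ClassOperations

lemma measurable_nat_sInf {α : Type*} [MeasurableSpace α] {p : α → ℕ → Prop}
    (hp : ∀ n, MeasurableSet {a | p a n}) : Measurable fun a => sInf {n | p a n} := by
  classical
  have hex (a : α) : ∃ n, p a n ∨ ∀ m, ¬ p a m := by
    by_cases h : ∃ n, p a n
    · exact h.imp fun _ => Or.inl
    · exact ⟨0, Or.inr (not_exists.1 h)⟩
  have hnone : MeasurableSet {a | ∀ m, ¬ p a m} := by
    simp only [ofPred_forall]
    exact MeasurableSet.iInter fun m => (hp m).compl
  convert measurable_find hex fun n => (hp n).union hnone using 2 with a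
  by_cases h : ∃ n, p a n
  · have hnot : ¬ ∀ m, ¬ p a m := not_forall_not.2 h
    simp only [Nat.sInf_def (s := {n | p a n}) h, mem_ofPred_eq, hnot, or_false]
  · have hempty : {n | p a n} = ∅ := eq_empty_of_forall_notMem (not_exists.1 h)
    rw [hempty, Nat.sInf_empty, eq_comm, Nat.find_eq_zero]
    exact Or.inr (not_exists.1 h)

namespace IsFeldmanMoore

variable [MeasurableSpace X] {α : Type*} [MeasurableSpace α] {E : X → X → Prop} {T : ℕ → X ≃ᵐ X}

lemma measurableSet_exists (hT : IsFeldmanMoore E T) {f : α → X} (hf : Measurable f)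
    {P : α → X → Prop} (hP : MeasurableSet {p : α × X | P p.1 p.2}) :
    MeasurableSet {a | ∃ y, E (f a) y ∧ P a y} := by
  have hunion : {a | ∃ y, E (f a) y ∧ P a y} = ⋃ n, {a | P a (T n (f a))} := by
    ext a
    simp only [mem_ofPred_eq, mem_iUnion]
    constructor
    · rintro ⟨y, hy, hPy⟩
      obtain ⟨n, rfl⟩ := hT.exists_eq hy
      exact ⟨n, hPy⟩
    · rintro ⟨n, hn⟩
      exact ⟨_, hT.rel n _, hn⟩
  rw [hunion]
  exact MeasurableSet.iUnion fun n => (measurable_id.prodMk ((T n).measurable.comp hf)) hP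

lemma measurableSet_forall (hT : IsFeldmanMoore E T) {f : α → X} (hf : Measurable f)
    {P : α → X → Prop} (hP : MeasurableSet {p : α × X | P p.1 p.2}) :
    MeasurableSet {a | ∀ y, E (f a) y → P a y} := by
  have hexists := hT.measurableSet_exists hf (P := fun a y => ¬ P a y) hP.compl
  convert hexists.compl using 1
  ext a
  simp

lemma exists_selector (hT : IsFeldmanMoore E T) {P : X → X → Prop}
    (hP : MeasurableSet {p : X × X | P p.1 p.2}) :
    ∃ f : X → X, Measurable f ∧ (∀ x, E x (f x)) ∧ ∀ x y, E x y → P x y → P x (f x) := by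
  refine ⟨fun x => T (sInf {n | P x (T n x)}) x, ?_, fun x => hT.rel _ x, fun x y hxy hPxy => ?_⟩
  · have hT' : Measurable fun p : ℕ × X => T p.1 p.2 :=
      measurable_from_prod_countable_right fun n => (T n).measurable
    have hindex : Measurable fun x => sInf {n | P x (T n x)} :=
      measurable_nat_sInf fun n => (measurable_id.prodMk (T n).measurable) hP
    exact hT'.comp (hindex.prodMk measurable_id)
  · obtain ⟨n, rfl⟩ := hT.exists_eq hxy
    exact Nat.sInf_mem (s := {n | P x (T n x)}) ⟨n, hPxy⟩

lemma exists_measurable_argmin (hT : IsFeldmanMoore E T) {Q : X → X → Prop}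
    (hQ : MeasurableSet {p : X × X | Q p.1 p.2}) {R : Type*} [LinearOrder R] [TopologicalSpace R]
    [OrderClosedTopology R] [SecondCountableTopology R] [MeasurableSpace R]
    [OpensMeasurableSpace R] {r : X → X → R} (hr : Measurable fun p : X × X => r p.1 p.2) :
    ∃ f : X → X, Measurable f ∧ (∀ x, E x (f x)) ∧
      ∀ x, (∃ y, MinimalFor (fun y => E x y ∧ Q x y) (r x) y) →
        MinimalFor (fun y => E x y ∧ Q x y) (r x) (f x) := by
  have hcmp : MeasurableSet {q : (X × X) × X | Q q.1.1 q.2 → r q.1.1 q.1.2 ≤ r q.1.1 q.2} := by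
    have hfst : Measurable fun q : (X × X) × X => (q.1.1, q.2) := by fun_prop
    exact (hfst hQ).imp (measurableSet_le (hr.comp measurable_fst) (hr.comp hfst))
  obtain ⟨f, hf, hfE, hfQ⟩ := hT.exists_selector
    (P := fun x y => Q x y ∧ ∀ z, E x z → Q x z → r x y ≤ r x z)
    (hQ.inter (hT.measurableSet_forall (f := Prod.fst) measurable_fst
      (P := fun p z => Q p.1 z → r p.1 p.2 ≤ r p.1 z) hcmp))
  refine ⟨f, hf, hfE, fun x ⟨y, hy⟩ => ?_⟩
  obtain ⟨hQf, hmin⟩ := hfQ x y hy.prop.1 ⟨hy.prop.2, fun z hz hQz => hy.le ⟨hz, hQz⟩⟩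
  exact ⟨⟨hfE x, hQf⟩, fun z hz _ => hmin z hz.1 hz.2⟩

end IsFeldmanMoore

/-- The points `x` for which `T n x` does not already occur as `T m x` with `m < n`. -/
def firstSet [MeasurableSpace X] (T : ℕ → X ≃ᵐ X) (n : ℕ) : Set X :=
  {x | ∀ m < n, T m x ≠ T n x}

lemma measurableSet_firstSet [MeasurableSpace X] [MeasurableEq X] (T : ℕ → X ≃ᵐ X) (n : ℕ) :
    MeasurableSet (firstSet T n) := by
  simp only [firstSet, ofPred_forall]
  exact MeasurableSet.iInter fun m => MeasurableSet.iInter fun _ =>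
    (measurableSet_eq_fun (T m).measurable (T n).measurable).compl

namespace IsFeldmanMoore

variable [MeasurableSpace X] {E : X → X → Prop} {T : ℕ → X ≃ᵐ X}

lemma apply_mem_firstSet (hT : IsFeldmanMoore E T) {n : ℕ} {x : X} (hx : x ∈ firstSet T n) :
    T n x ∈ firstSet T n := by
  intro m hm h
  rw [hT.involutive n x] at h
  refine hx m hm ?_
  rw [← h, hT.involutive m (T n x), h]

lemma apply_mem_firstSet_iff (hT : IsFeldmanMoore E T) {n : ℕ} {x : X} :
    T n x ∈ firstSet T n ↔ x ∈ firstSet T n :=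
  ⟨fun h => hT.involutive n x ▸ hT.apply_mem_firstSet h, hT.apply_mem_firstSet⟩

lemma tsum_class_eq (hT : IsFeldmanMoore E T) (G : X → X → ℝ≥0∞) (x : X) :
    ∑' y : {y | E x y}, G x y = ∑' n, (firstSet T n).indicator (fun x => G x (T n x)) x := by
  let e : {n | x ∈ firstSet T n} → {y | E x y} := fun n => ⟨T n x, hT.rel n x⟩
  have hinj : Function.Injective e := by
    rintro ⟨n, hn⟩ ⟨m, hm⟩ h
    have hnm : T n x = T m x := congrArg Subtype.val h
    rcases lt_trichotomy n m with hlt | heq | hlt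
    · exact absurd hnm (hm n hlt)
    · exact Subtype.ext heq
    · exact absurd hnm.symm (hn m hlt)
  have hsurj : Function.Surjective e := by
    classical
    rintro ⟨y, hy⟩
    have hex := hT.exists_eq hy
    refine ⟨⟨Nat.find hex, fun m hm h => ?_⟩, Subtype.ext (Nat.find_spec hex)⟩
    exact Nat.find_min hex hm (h.trans (Nat.find_spec hex))
  calc ∑' y : {y | E x y}, G x y
      = ∑' n : {n | x ∈ firstSet T n}, G x (T n x) :=
        ((Equiv.ofBijective e ⟨hinj, hsurj⟩).tsum_eq fun y => G x y).symm
    _ = ∑' n, (firstSet T n).indicator (fun x => G x (T n x)) x :=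
        tsum_subtype {n | x ∈ firstSet T n} fun n => G x (T n x)

lemma measurable_tsum_class [MeasurableEq X] (hT : IsFeldmanMoore E T) {G : X → X → ℝ≥0∞}
    (hG : Measurable fun p : X × X => G p.1 p.2) :
    Measurable fun x => ∑' y : {y | E x y}, G x y := by
  simp_rw [hT.tsum_class_eq G]
  exact Measurable.tsum fun n =>
    (hG.comp (measurable_id.prodMk (T n).measurable)).indicator (measurableSet_firstSet T n)

lemma measurable_eSize [MeasurableEq X] (hT : IsFeldmanMoore E T) {ρ : X → X → ℝ}
    (hρ : IsCocycle E ρ) {R : X → X → Prop} (hR : MeasurableSet {p : X × X | R p.1 p.2})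
    {s : X → X} (hs : Measurable s) : Measurable fun x => eSize ρ {y | E x y ∧ R x y} (s x) := by
  let G : X → X → ℝ≥0∞ := fun x => {y | R x y}.indicator fun y => ENNReal.ofReal (ρ y (s x))
  have hG : Measurable fun p : X × X => G p.1 p.2 :=
    (hρ.measurable_comp measurable_snd (hs.comp measurable_fst)).ennreal_ofReal.indicator hR
  convert hT.measurable_tsum_class hG using 2 with x
  exact eSize_inter_eq_tsum_subtype

end IsFeldmanMoore

end ClassOperations

section InvariantMeasures

variable [MeasurableSpace X] {E : X → X → Prop} {ρ : X → X → ℝ} {T : ℕ → X ≃ᵐ X} {μ : Measure X}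

namespace IsInvariant

lemma lintegral_eq (hμ : IsInvariant E ρ μ) (hρ : IsCocycle E ρ) {T : X ≃ᵐ X}
    (hT : ∀ x, E (T x) x) {G : X → ℝ≥0∞} (hG : Measurable G) :
    ∫⁻ x, G x ∂μ = ∫⁻ x, ENNReal.ofReal (ρ (T x) x) * G (T x) ∂μ := by
  have hderiv : Measurable fun x => ENNReal.ofReal (ρ (T x) x) :=
    (hρ.measurable_comp T.measurable measurable_id).ennreal_ofReal
  have hmap : μ.map T.symm = μ.withDensity fun x => ENNReal.ofReal (ρ (T x) x) := by
    ext B hB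
    rw [withDensity_apply _ hB, Measure.map_apply T.symm.measurable hB, ← hμ T hT B hB,
      MeasurableEquiv.image_eq_preimage_symm]
  have hGT : Measurable fun x => G (T x) := hG.comp T.measurable
  calc ∫⁻ x, G x ∂μ
      = ∫⁻ x, G (T x) ∂μ.map T.symm := by simp [lintegral_map hGT T.symm.measurable]
    _ = ∫⁻ x, ENNReal.ofReal (ρ (T x) x) * G (T x) ∂μ := by
      rw [hmap, lintegral_withDensity_eq_lintegral_mul _ hderiv hGT]
      rfl

lemma lintegral_tsum_comm [MeasurableEq X] (hμ : IsInvariant E ρ μ) (hE : IsCBER E)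
    (hρ : IsCocycle E ρ) (hT : IsFeldmanMoore E T) {f : X → X → ℝ≥0∞}
    (hf : Measurable fun p : X × X => f p.1 p.2) :
    ∫⁻ x, ∑' y : {y | E x y}, f x y ∂μ
      = ∫⁻ x, ∑' y : {y | E x y}, f y x * ENNReal.ofReal (ρ y x) ∂μ := by
  let out : ℕ → X → ℝ≥0∞ := fun n x => f x (T n x)
  let inn : ℕ → X → ℝ≥0∞ := fun n x => f (T n x) x * ENNReal.ofReal (ρ (T n x) x)
  have hTn (n : ℕ) := (T n).measurable
  have hout (n) : Measurable (out n) := hf.comp (measurable_id.prodMk (hTn n))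
  have hinn (n) : Measurable (inn n) :=
    (hf.comp ((hTn n).prodMk measurable_id)).mul
      (hρ.measurable_comp (hTn n) measurable_id).ennreal_ofReal
  have hfirst := measurableSet_firstSet T
  have hterm (n : ℕ) (x : X) : (firstSet T n).indicator (out n) x =
      ENNReal.ofReal (ρ (T n x) x) * (firstSet T n).indicator (inn n) (T n x) := by
    by_cases hx : x ∈ firstSet T n
    · rw [indicator_of_mem hx, indicator_of_mem (hT.apply_mem_firstSet hx)]
      simp only [out, inn, hT.involutive n x]
      rw [mul_left_comm, hρ.ofReal_mul_symm hE (hE.symm (hT.rel n x)), mul_one]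
    · rw [indicator_of_notMem hx, indicator_of_notMem (mt hT.apply_mem_firstSet_iff.1 hx),
        mul_zero]
  simp_rw [hT.tsum_class_eq f, hT.tsum_class_eq fun x y => f y x * ENNReal.ofReal (ρ y x)]
  rw [lintegral_tsum fun n => ((hout n).indicator (hfirst n)).aemeasurable,
    lintegral_tsum fun n => ((hinn n).indicator (hfirst n)).aemeasurable]
  refine tsum_congr fun n => ?_
  rw [hμ.lintegral_eq hρ (fun x => hE.symm (hT.rel n x)) ((hinn n).indicator (hfirst n))]
  exact lintegral_congr (hterm n)

lemma measure_saturation_eq_zero (hμ : IsInvariant E ρ μ) (hE : IsCBER E)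
    (hT : IsFeldmanMoore E T) {N : Set X} (hN : μ N = 0) : μ {x | ∃ y ∈ N, E x y} = 0 := by
  have hcover : {x | ∃ y ∈ N, E x y} ⊆ ⋃ n, T n '' toMeasurable μ N := by
    rintro x ⟨y, hy, hxy⟩
    obtain ⟨n, rfl⟩ := hT.exists_eq hxy
    exact mem_iUnion.2 ⟨n, T n x, subset_toMeasurable μ N hy, hT.involutive n x⟩
  refine measure_mono_null hcover (measure_iUnion_null fun n => ?_)
  rw [hμ (T n) (fun x => hE.symm (hT.rel n x)) _ (measurableSet_toMeasurable μ N)]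
  exact setLIntegral_measure_zero _ _ ((measure_toMeasurable N).trans hN)

lemma smul (hμ : IsInvariant E ρ μ) (a : ℝ≥0∞) : IsInvariant E ρ (a • μ) := by
  intro T hT B hB
  rw [Measure.smul_apply, Measure.restrict_smul, lintegral_smul_measure, hμ T hT B hB]

end IsInvariant

lemma measurePreserving_count (T : X ≃ᵐ X) :
    MeasurePreserving T Measure.count Measure.count := by
  refine ⟨T.measurable, Measure.ext fun B hB => ?_⟩
  rw [Measure.map_apply T.measurable hB, Measure.count_apply (T.measurable hB),
    Measure.count_apply hB, ← T.image_symm, T.symm.injective.encard_image]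

lemma IsCBER.measurableSet_class (hE : IsCBER E) (x : X) : MeasurableSet {y | E x y} :=
  measurable_prodMk_left hE.2.1

lemma isInvariant_withDensity_count (hE : IsCBER E) (hρ : IsCocycle E ρ) (x : X) :
    IsInvariant E ρ
      ((Measure.count.restrict {y | E x y}).withDensity fun y => ENNReal.ofReal (ρ y x)) := by
  intro T hT B hB
  have hclass : T ⁻¹' {y | E x y} = {y | E x y} :=
    Set.ext fun y => ⟨fun h => hE.trans h (hT y), fun h => hE.trans h (hE.symm (hT y))⟩
  have hpres := (measurePreserving_count T).restrict_preimage (hE.measurableSet_class x)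
  rw [hclass] at hpres
  have hw : Measurable fun y => ENNReal.ofReal (ρ y x) :=
    (hρ.measurable_comp measurable_id measurable_const).ennreal_ofReal
  have hderiv : Measurable fun y => ENNReal.ofReal (ρ (T y) y) :=
    (hρ.measurable_comp T.measurable measurable_id).ennreal_ofReal
  rw [withDensity_apply _ (T.measurableEmbedding.measurableSet_image.2 hB),
    ← hpres.setLIntegral_comp_emb T.measurableEmbedding,
    setLIntegral_withDensity_eq_setLIntegral_mul _ hw hderiv hB]
  refine setLIntegral_congr_fun_ae hB ?_
  filter_upwards [ae_restrict_mem (hE.measurableSet_class x)] with y hy _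
  exact (hρ.ofReal_mul (hT y) (hE.symm hy)).symm.trans (mul_comm _ _)

lemma exists_isProbabilityMeasure_isInvariant [MeasurableSingletonClass X] (hE : IsCBER E)
    (hρ : IsCocycle E ρ) {x : X} (hx : eSize ρ {y | E x y} x ≠ ⊤) :
    ∃ μ : Measure X, IsProbabilityMeasure μ ∧ IsInvariant E ρ μ := by
  let ν := (Measure.count.restrict {y | E x y}).withDensity fun y => ENNReal.ofReal (ρ y x)
  have hν : ν univ = eSize ρ {y | E x y} x := by
    rw [withDensity_apply _ MeasurableSet.univ, Measure.restrict_univ,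
      lintegral_countable _ (hE.2.2 x)]
    simp only [Measure.count_singleton, mul_one, eSize]
  have hx0 : eSize ρ {y | E x y} x ≠ 0 := eSize_ne_zero (hE.refl x) (hρ.pos (hE.refl x))
  refine ⟨(ν univ)⁻¹ • ν, ⟨?_⟩, (isInvariant_withDensity_count hE hρ x).smul _⟩
  rw [Measure.smul_apply, smul_eq_mul, hν, ENNReal.inv_mul_cancel hx0 hx]

end InvariantMeasures

section NoCompression

lemma setOf_map_mk_eq {s : Setoid X} {φ : Quotient s → Quotient s} {x y : X}
    (h : φ (Quotient.mk s x) = Quotient.mk s y) :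
    {z | φ (Quotient.mk s x) = Quotient.mk s z} = {z | s.r z y} := by
  ext z
  rw [mem_ofPred_eq, h, eq_comm]
  exact Quotient.eq

variable [MeasurableSpace X] {E F : X → X → Prop} {ρ : X → X → ℝ} {T : ℕ → X ≃ᵐ X}

lemma IsFinSubequiv.refl (hF : IsFinSubequiv E F) (x : X) : F x x := hF.1.refl x

lemma IsFinSubequiv.symm (hF : IsFinSubequiv E F) {x y : X} (h : F x y) : F y x := hF.1.symm h

lemma IsFinSubequiv.trans (hF : IsFinSubequiv E F) {x y z : X} (hxy : F x y) (hyz : F y z) :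
    F x z := hF.1.trans hxy hyz

lemma IsFinSubequiv.finite_class (hF : IsFinSubequiv E F) (x : X) : {y | F y x}.Finite :=
  (hF.2.2.2 x).subset fun _ hy => hF.symm hy

lemma IsFinSubequiv.exists_measurable_transversal [StandardBorelSpace X] (hF : IsFinSubequiv E F)
    (hT : IsFeldmanMoore E T) :
    ∃ t : X → X, Measurable t ∧ (∀ x, F x (t x)) ∧ ∀ x y, F x y → t x = t y := by
  obtain ⟨e, he⟩ := exists_measurableEmbedding_real X
  obtain ⟨t, ht, -, htmin⟩ := hT.exists_measurable_argmin hF.2.1 (r := fun _ z => e z)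
    (he.measurable.comp measurable_snd)
  have hmin (x : X) : F x (t x) ∧ ∀ z, F x z → e (t x) ≤ e z := by
    obtain ⟨y, hy, hle⟩ := exists_min_image {y | F x y} e (hF.2.2.2 x) ⟨x, hF.refl x⟩
    have htx := htmin x ⟨y, ⟨hF.2.2.1 hy, hy⟩, fun z hz _ => hle z hz.2⟩
    exact ⟨htx.prop.2, fun z hz => htx.le ⟨hF.2.2.1 hz, hz⟩⟩
  refine ⟨t, ht, fun x => (hmin x).1, fun x y hxy => he.injective (le_antisymm ?_ ?_)⟩
  · exact (hmin x).2 _ (hF.trans hxy (hmin y).1)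
  · exact (hmin y).2 _ (hF.trans (hF.symm hxy) (hmin x).1)

lemma measurableEq_of_measurable_injective {α β : Type*} [MeasurableSpace α] [MeasurableSpace β]
    [MeasurableEq β] {f : α → β} (hf : Measurable f) (hinj : Function.Injective f) :
    MeasurableEq α := by
  refine ⟨?_⟩
  convert measurableSet_eq_fun (hf.comp measurable_fst) (hf.comp measurable_snd) using 1
  ext p
  exact hinj.eq_iff.symm

lemma IsFinSubequiv.measurableEq_quotient [StandardBorelSpace X] {s : Setoid X}
    (hs : IsFinSubequiv E s.r) (hT : IsFeldmanMoore E T) : MeasurableEq (Quotient s) := by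
  obtain ⟨t, ht, hst, hteq⟩ := hs.exists_measurable_transversal hT
  refine measurableEq_of_measurable_injective (f := Quotient.lift t hteq)
    (measurable_from_quotient.2 ht) ?_
  rintro ⟨x⟩ ⟨y⟩ (hxy : t x = t y)
  exact Quotient.sound (hs.trans (hst x) (hxy ▸ hs.symm (hst y)))

/-- The size `|φ⁻¹(C)|^C` of the fibre of `φ` over the class `C` of `x`. -/
noncomputable def fiberSize (ρ : X → X → ℝ) {s : Setoid X} (φ : Quotient s → Quotient s) (x : X) :
    ℝ≥0∞ :=
  relSize ρ {y | φ (Quotient.mk s y) = Quotient.mk s x} {y | s.r y x} x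

/-- The transport in which every point `x` spreads a unit mass over the class `φ [x]`,
in proportion to `ρ`. -/
noncomputable def spread (ρ : X → X → ℝ) {s : Setoid X} (φ : Quotient s → Quotient s) (x : X) :
    X → ℝ≥0∞ :=
  {y | φ (Quotient.mk s x) = Quotient.mk s y}.indicator fun y =>
    ENNReal.ofReal (ρ y x) / eSize ρ {z | φ (Quotient.mk s x) = Quotient.mk s z} x

variable {s : Setoid X} {φ : Quotient s → Quotient s}

lemma measurable_spread [MeasurableEq X] (hT : IsFeldmanMoore E T) (hρ : IsCocycle E ρ)
    (hφE : ∀ x y, φ (Quotient.mk s x) = Quotient.mk s y → E x y)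
    (hφ : MeasurableSet {p : X × X | φ (Quotient.mk s p.1) = Quotient.mk s p.2}) :
    Measurable fun p : X × X => spread ρ φ p.1 p.2 := by
  have hsize := hT.measurable_eSize hρ
    (R := fun x y => φ (Quotient.mk s x) = Quotient.mk s y) hφ measurable_id
  simp only [and_iff_right_of_imp (hφE _ _), id] at hsize
  exact ((hρ.measurable_comp measurable_snd measurable_fst).ennreal_ofReal.div
    (hsize.comp measurable_fst)).indicator hφ

lemma tsum_spread (hE : IsCBER E) (hρ : IsCocycle E ρ) (hs : IsFinSubequiv E s.r)
    (hφE : ∀ x y, φ (Quotient.mk s x) = Quotient.mk s y → E x y) (x : X) :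
    ∑' y : {y | E x y}, spread ρ φ x y = 1 := by
  obtain ⟨y, hy⟩ := Quotient.exists_rep (φ (Quotient.mk s x))
  have hxy := hφE x y hy.symm
  have hsub : {z | φ (Quotient.mk s x) = Quotient.mk s z} ⊆ {z | E x z} := hφE x
  simp only [spread, div_eq_mul_inv, indicator_mul_const]
  rw [ENNReal.tsum_mul_right, ← eSize_inter_eq_tsum_subtype, inter_eq_right.2 hsub,
    setOf_map_mk_eq hy.symm]
  exact ENNReal.mul_inv_cancel (eSize_ne_zero (hs.refl y) (hρ.pos (hE.symm hxy)))
    (eSize_ne_top (hs.finite_class y) x)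

lemma spread_mul (hρ : IsCocycle E ρ) (hs : IsFinSubequiv E s.r) {x y : X}
    (hxy : E x y) :
    spread ρ φ y x * ENNReal.ofReal (ρ y x) =
      {y | φ (Quotient.mk s y) = Quotient.mk s x}.indicator (fun y => ENNReal.ofReal (ρ y x)) y *
        (eSize ρ {y | s.r y x} x)⁻¹ := by
  by_cases hy : φ (Quotient.mk s y) = Quotient.mk s x
  · have hpos : ENNReal.ofReal (ρ x y) ≠ 0 := (ENNReal.ofReal_pos.2 (hρ.pos hxy)).ne'
    have hspread : spread ρ φ y x = (eSize ρ {y | s.r y x} x)⁻¹ := by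
      rw [spread, indicator_of_mem (s := {z | φ (Quotient.mk s y) = Quotient.mk s z}) hy,
        setOf_map_mk_eq hy,
        ← hρ.eSize_mul (Y := {z | s.r z x}) (fun z hz => hs.2.2.1 hz) hxy, ← one_div]
      simpa only [one_mul] using
        ENNReal.mul_div_mul_right 1 (eSize ρ {y | s.r y x} x) hpos ENNReal.ofReal_ne_top
    rw [hspread, indicator_of_mem (s := {y | φ (Quotient.mk s y) = Quotient.mk s x}) hy, mul_comm]
  · rw [spread, indicator_of_notMem (s := {z | φ (Quotient.mk s y) = Quotient.mk s z}) hy,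
      indicator_of_notMem (s := {y | φ (Quotient.mk s y) = Quotient.mk s x}) hy, zero_mul, zero_mul]

lemma tsum_spread_mul (hE : IsCBER E) (hρ : IsCocycle E ρ) (hs : IsFinSubequiv E s.r)
    (hφE : ∀ x y, φ (Quotient.mk s x) = Quotient.mk s y → E x y) (x : X) :
    ∑' y : {y | E x y}, spread ρ φ y x * ENNReal.ofReal (ρ y x) = fiberSize ρ φ x := by
  have hsub : {y | φ (Quotient.mk s y) = Quotient.mk s x} ⊆ {y | E x y} :=
    fun y hy => hE.symm (hφE y x hy)
  rw [fiberSize, relSize, ← inter_eq_right.2 hsub, eSize_inter_eq_tsum_subtype, div_eq_mul_inv,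
    ← ENNReal.tsum_mul_right]
  exact tsum_congr fun y => spread_mul hρ hs y.2

lemma IsInvariant.lintegral_fiberSize [MeasurableEq X] {μ : Measure X} (hμ : IsInvariant E ρ μ)
    (hE : IsCBER E) (hT : IsFeldmanMoore E T) (hρ : IsCocycle E ρ) (hs : IsFinSubequiv E s.r)
    (hφE : ∀ x y, φ (Quotient.mk s x) = Quotient.mk s y → E x y)
    (hφ : MeasurableSet {p : X × X | φ (Quotient.mk s p.1) = Quotient.mk s p.2}) :
    ∫⁻ x, fiberSize ρ φ x ∂μ = μ univ := by
  have htransport := hμ.lintegral_tsum_comm hE hρ hT (measurable_spread hT hρ hφE hφ)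
  simpa only [tsum_spread hE hρ hs hφE, tsum_spread_mul hE hρ hs hφE, lintegral_one]
    using htransport.symm

theorem IsInvariant.measure_univ_eq_zero_of_quotCompressionOn [StandardBorelSpace X]
    {μ : Measure X} [IsFiniteMeasure μ] (hμ : IsInvariant E ρ μ) (hE : IsCBER E)
    (hT : IsFeldmanMoore E T) (hρ : IsCocycle E ρ) (hs : IsFinSubequiv E s.r)
    (hφ : Measurable φ) (hcomp : QuotCompressionOn E ρ univ s φ) : μ univ = 0 := by
  obtain ⟨hφE, hle, hlt⟩ := hcomp
  simp only [mem_univ, true_and, and_true, forall_const] at hφE hle hlt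
  have := hs.measurableEq_quotient hT
  have hgraph : MeasurableSet {p : X × X | φ (Quotient.mk s p.1) = Quotient.mk s p.2} :=
    measurableSet_eq_fun (hφ.comp (measurable_quotient_mk''.comp measurable_fst))
      (measurable_quotient_mk''.comp measurable_snd)
  have hint := hμ.lintegral_fiberSize hE hT hρ hs (fun x y => hφE y) hgraph
  have hae : fiberSize ρ φ =ᵐ[μ] fun _ => 1 := by
    refine ae_eq_of_ae_le_of_lintegral_le (ae_of_all μ fun x => hle (x := x)) ?_
      aemeasurable_const ?_
    · rw [hint]
      exact measure_ne_top μ univ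
    · rw [hint, lintegral_one]
  have hnull : μ {x | fiberSize ρ φ x < 1} = 0 :=
    measure_mono_null (fun x (hx : fiberSize ρ φ x < 1) => hx.ne) (ae_iff.1 hae)
  have hsat := hμ.measure_saturation_eq_zero hE hT hnull
  have hall : {x | ∃ y ∈ {x | fiberSize ρ φ x < 1}, E x y} = univ :=
    eq_univ_of_forall fun x => (hlt (x := x)).imp fun y hy => hy.symm
  rwa [hall] at hsat

end NoCompression

section Doubling

/-- The indices at which a sequence has more than doubled: the value of `a` at each of them is at
least one more than twice the value at the preceding one. -/
noncomputable def doublingIndex (a : ℕ → ℝ≥0∞) : ℕ → ℕ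
  | 0 => 0
  | k + 1 => sInf {n | 2 * a (doublingIndex a k) + 1 ≤ a n}

/-- The number `k` of the interval between consecutive doubling indices `k` and `k + 1` of `a`
to which `n` belongs. -/
noncomputable def doublingBlock (a : ℕ → ℝ≥0∞) (n : ℕ) : ℕ :=
  sInf {k | n < doublingIndex a (k + 1)}

variable {a : ℕ → ℝ≥0∞}

lemma doublingIndex_spec (hfin : ∀ n, a n ≠ ⊤) (hsup : ⨆ n, a n = ⊤) (k : ℕ) :
    2 * a (doublingIndex a k) + 1 ≤ a (doublingIndex a (k + 1)) := by
  have htop : 2 * a (doublingIndex a k) + 1 < ⊤ :=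
    ENNReal.add_lt_top.2 ⟨ENNReal.mul_lt_top ENNReal.ofNat_lt_top (hfin _).lt_top,
      ENNReal.one_lt_top⟩
  obtain ⟨n, hn⟩ := iSup_eq_top.1 hsup _ htop
  exact Nat.sInf_mem (s := {n | 2 * a (doublingIndex a k) + 1 ≤ a n}) ⟨n, hn.le⟩

lemma strictMono_doublingIndex (hmono : Monotone a) (hfin : ∀ n, a n ≠ ⊤) (hsup : ⨆ n, a n = ⊤) :
    StrictMono (doublingIndex a) := by
  refine strictMono_nat_of_lt_succ fun k => hmono.reflect_lt ?_
  calc a (doublingIndex a k) < a (doublingIndex a k) + 1 :=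
        ENNReal.lt_add_right (hfin _) one_ne_zero
    _ ≤ 2 * a (doublingIndex a k) + 1 := by
        gcongr
        exact le_mul_of_one_le_left' one_le_two
    _ ≤ a (doublingIndex a (k + 1)) := doublingIndex_spec hfin hsup k

lemma doublingBlock_lt_iff (hmono : Monotone a) (hfin : ∀ n, a n ≠ ⊤) (hsup : ⨆ n, a n = ⊤)
    {n k : ℕ} : doublingBlock a n < k ↔ n < doublingIndex a k := by
  have hstrict := strictMono_doublingIndex hmono hfin hsup
  constructor
  · intro hk
    have hlt : n < doublingIndex a (doublingBlock a n + 1) :=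
      Nat.sInf_mem (s := {k | n < doublingIndex a (k + 1)}) ⟨n, hstrict.id_le (n + 1)⟩
    exact hlt.trans_le (hstrict.monotone hk)
  · cases k with
    | zero => exact fun h => absurd h n.not_lt_zero
    | succ k => exact fun h => Nat.lt_succ_of_le (Nat.sInf_le h)

variable {α : Type*} [MeasurableSpace α] {A : α → ℕ → ℝ≥0∞}

lemma measurable_doublingIndex (hA : ∀ n, Measurable fun x => A x n) (k : ℕ) :
    Measurable fun x => doublingIndex (A x) k := by
  induction k with
  | zero => exact measurable_const
  | succ k ih =>
    have hA' : Measurable fun p : ℕ × α => A p.2 p.1 := measurable_from_prod_countable_right hA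
    exact measurable_nat_sInf fun n => measurableSet_le
      (((hA'.comp (ih.prodMk measurable_id)).const_mul 2).add_const 1) (hA n)

lemma measurable_doublingBlock (hA : ∀ n, Measurable fun x => A x n) {f : α → ℕ}
    (hf : Measurable f) : Measurable fun x => doublingBlock (A x) (f x) :=
  measurable_nat_sInf fun k => measurableSet_lt hf (measurable_doublingIndex hA (k + 1))

end Doubling

section Blocks

/-- The `ρ`-size of the points of `Y` with code below `n`. -/
noncomputable def initialSize (ρ : X → X → ℝ) (code : X → ℕ) (Y : Set X) (z : X) (n : ℕ) :
    ℝ≥0∞ :=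
  eSize ρ {y | y ∈ Y ∧ code y < n} z

/-- Cuts `Y`, enumerated by `code`, into successive blocks, each larger in `ρ`-size than all the
preceding ones together. -/
noncomputable def blockIndex (ρ : X → X → ℝ) (code : X → ℕ) (Y : Set X) (z : X) (y : X) : ℕ :=
  doublingBlock (initialSize ρ code Y z) (code y)

variable {ρ : X → X → ℝ} {code : X → ℕ} {Y : Set X} {z : X}

lemma monotone_initialSize : Monotone (initialSize ρ code Y z) :=
  fun n m hnm => eSize_mono (Y := {y | y ∈ Y ∧ code y < n}) (Z := {y | y ∈ Y ∧ code y < m})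
    (fun _ hy => ⟨hy.1, hy.2.trans_le hnm⟩) z

lemma finite_code_lt (hcode : InjOn code Y) (n : ℕ) : {y | y ∈ Y ∧ code y < n}.Finite :=
  Finite.of_injOn (t := Iio n) (fun _ => And.right) (hcode.mono (sep_subset Y _)) (finite_Iio n)

lemma initialSize_ne_top (hcode : InjOn code Y) (n : ℕ) : initialSize ρ code Y z n ≠ ⊤ :=
  eSize_ne_top (finite_code_lt hcode n) z

lemma iSup_initialSize : ⨆ n, initialSize ρ code Y z n = eSize ρ Y z := by
  refine le_antisymm (iSup_le fun n => eSize_mono (fun _ hy => hy.1) z) ?_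
  rw [eSize, ENNReal.tsum_eq_iSup_sum]
  refine iSup_le fun s => ?_
  obtain ⟨n, hn⟩ : ∃ n, ∀ y ∈ s, (y : X) ∈ {y | code y < n} :=
    ⟨s.sup (fun y : Y => code y) + 1, fun y hy =>
      Nat.lt_succ_of_le (Finset.le_sup (f := fun y : Y => code y) hy)⟩
  calc ∑ y ∈ s, ENNReal.ofReal (ρ y z)
      = ∑ y ∈ s, {y | code y < n}.indicator (fun y => ENNReal.ofReal (ρ y z)) y :=
        Finset.sum_congr rfl fun y hy =>
          (indicator_of_mem (hn y hy) fun y => ENNReal.ofReal (ρ y z)).symm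
    _ ≤ initialSize ρ code Y z n :=
        (ENNReal.sum_le_tsum s).trans_eq eSize_inter_eq_tsum_subtype.symm
    _ ≤ ⨆ n, initialSize ρ code Y z n := le_iSup _ n

lemma blockIndex_lt_iff (hcode : InjOn code Y) (hY : eSize ρ Y z = ⊤) {y : X} {k : ℕ} :
    blockIndex ρ code Y z y < k ↔ code y < doublingIndex (initialSize ρ code Y z) k :=
  doublingBlock_lt_iff monotone_initialSize (initialSize_ne_top hcode)
    (iSup_initialSize.trans hY)

lemma finite_block (hcode : InjOn code Y) (hY : eSize ρ Y z = ⊤) (k : ℕ) :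
    {y | y ∈ Y ∧ blockIndex ρ code Y z y = k}.Finite :=
  (finite_code_lt hcode _).subset fun _ hy =>
    ⟨hy.1, (blockIndex_lt_iff hcode hY).1 (hy.2.trans_lt k.lt_succ_self)⟩

lemma eSize_block_add (hcode : InjOn code Y) (hY : eSize ρ Y z = ⊤) (k : ℕ) :
    initialSize ρ code Y z (doublingIndex (initialSize ρ code Y z) k) +
        eSize ρ {y | y ∈ Y ∧ blockIndex ρ code Y z y = k} z =
      initialSize ρ code Y z (doublingIndex (initialSize ρ code Y z) (k + 1)) := by
  simp only [initialSize.eq_def _ _ _ _ (doublingIndex _ _), ← blockIndex_lt_iff hcode hY]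
  rw [← eSize_union]
  · congr 1
    ext y
    simp only [mem_union, mem_ofPred_eq, Nat.lt_succ_iff_lt_or_eq, and_or_left]
  · exact disjoint_left.2 fun y hlt heq => hlt.2.ne heq.2

lemma add_one_le_eSize_block (hcode : InjOn code Y) (hY : eSize ρ Y z = ⊤) (k : ℕ) :
    initialSize ρ code Y z (doublingIndex (initialSize ρ code Y z) k) + 1 ≤
      eSize ρ {y | y ∈ Y ∧ blockIndex ρ code Y z y = k} z := by
  have hspec := doublingIndex_spec (initialSize_ne_top hcode) (iSup_initialSize.trans hY) k
  rw [← eSize_block_add hcode hY k, two_mul, add_assoc] at hspec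
  exact (ENNReal.add_le_add_iff_left (initialSize_ne_top hcode _)).1 hspec

lemma eSize_block_le_succ (hcode : InjOn code Y) (hY : eSize ρ Y z = ⊤) (k : ℕ) :
    eSize ρ {y | y ∈ Y ∧ blockIndex ρ code Y z y = k} z ≤
      eSize ρ {y | y ∈ Y ∧ blockIndex ρ code Y z y = k + 1} z :=
  calc eSize ρ {y | y ∈ Y ∧ blockIndex ρ code Y z y = k} z
      ≤ initialSize ρ code Y z (doublingIndex (initialSize ρ code Y z) (k + 1)) :=
        le_add_self.trans_eq (eSize_block_add hcode hY k)
    _ ≤ initialSize ρ code Y z (doublingIndex (initialSize ρ code Y z) (k + 1)) + 1 := le_self_add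
    _ ≤ eSize ρ {y | y ∈ Y ∧ blockIndex ρ code Y z y = k + 1} z :=
        add_one_le_eSize_block hcode hY (k + 1)

lemma exists_blockIndex_eq (hcode : InjOn code Y) (hY : eSize ρ Y z = ⊤) (k : ℕ) :
    ∃ y ∈ Y, blockIndex ρ code Y z y = k := by
  by_contra! h
  have hempty : {y | y ∈ Y ∧ blockIndex ρ code Y z y = k} = ∅ :=
    eq_empty_of_forall_notMem fun y hy => h y hy.1 hy.2
  have hle := add_one_le_eSize_block hcode hY k
  rw [hempty, eSize_empty] at hle
  exact one_ne_zero (add_eq_zero.1 (nonpos_iff_eq_zero.1 hle)).2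

end Blocks

section InjCompression

/-- Over the `E`-invariant set `W`, the point map `G` induces an injective compression of the
quotient of `ρ` by the subequivalence relation `F` of `E`; this is the local and injective form of
`CompressionOver`. The field `map_iff` carries both well-definedness and injectivity of the induced
map; `le` and `rel` are required off `W` too, so that compressions over two sets can be glued. -/
structure IsInjCompressionOn (E F : X → X → Prop) (ρ : X → X → ℝ) (G : X → X) (W : Set X) :
    Prop where
  le : ∀ ⦃x y⦄, F x y → E x y
  rel : ∀ x, E x (G x)
  finite : ∀ x ∈ W, {y | F y x}.Finite
  map_iff : ∀ x ∈ W, ∀ y, F (G y) (G x) ↔ F y x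
  relSize_le : ∀ x ∈ W, relSize ρ (G ⁻¹' {y | F y x}) {y | F y x} x ≤ 1
  exists_relSize_lt : ∀ x ∈ W, ∃ y, E x y ∧ relSize ρ (G ⁻¹' {z | F z y}) {z | F z y} y < 1

namespace IsInjCompressionOn

variable {E F F' : X → X → Prop} {ρ : X → X → ℝ} {G G' : X → X} {W W' : Set X}

lemma union (h : IsInjCompressionOn E F ρ G W) (h' : IsInjCompressionOn E F ρ G W') :
    IsInjCompressionOn E F ρ G (W ∪ W') where
  le := h.le
  rel := h.rel
  finite x := Or.rec (h.finite x) (h'.finite x)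
  map_iff x := Or.rec (h.map_iff x) (h'.map_iff x)
  relSize_le x := Or.rec (h.relSize_le x) (h'.relSize_le x)
  exists_relSize_lt x := Or.rec (h.exists_relSize_lt x) (h'.exists_relSize_lt x)

variable [MeasurableSpace X]

lemma congr (h : IsInjCompressionOn E F ρ G W) (hE : IsCBER E) (hW : EInvariant E W)
    (hle : ∀ ⦃x y⦄, F' x y → E x y) (hG' : ∀ x, E x (G' x))
    (hF : ∀ x ∈ W, ∀ y, F' y x ↔ F y x) (hG : EqOn G' G W) :
    IsInjCompressionOn E F' ρ G' W := by
  have hclass {x : X} (hx : x ∈ W) : {y | F' y x} = {y | F y x} := ext (hF x hx)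
  have hmap {x y : X} (hx : x ∈ W) : F' (G' y) x ↔ F (G y) x := by
    refine ⟨fun hy => ?_, fun hy => ?_⟩
    · have hyW : y ∈ W := hW (hE.trans (hE.symm (hle hy)) (hE.symm (hG' y))) hx
      rwa [hF x hx, hG hyW] at hy
    · have hyW : y ∈ W := hW (hE.trans (hE.symm (h.le hy)) (hE.symm (h.rel y))) hx
      rwa [hF x hx, hG hyW]
  have hfiber {x : X} (hx : x ∈ W) : G' ⁻¹' {y | F' y x} = G ⁻¹' {y | F y x} :=
    ext fun y => hmap hx
  refine ⟨hle, hG', fun x hx => ?_, fun x hx y => ?_, fun x hx => ?_, fun x hx => ?_⟩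
  · exact hclass hx ▸ h.finite x hx
  · rw [hG hx, hmap (hW (h.rel x) hx), h.map_iff x hx, hF x hx]
  · rw [hfiber hx, hclass hx]
    exact h.relSize_le x hx
  · obtain ⟨y, hxy, hy⟩ := h.exists_relSize_lt x hx
    refine ⟨y, hxy, ?_⟩
    rwa [hfiber (hW hxy hx), hclass (hW hxy hx)]

lemma of_injOn (hE : IsCBER E) (hρ : IsCocycle E ρ) (hW : EInvariant E W)
    (hG : ∀ x, E x (G x)) (hinj : InjOn G W) (hlt : ∀ x ∈ W, 1 < ρ (G x) x) :
    IsInjCompressionOn E Eq ρ G W := by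
  have hmemW {x y : X} (hx : x ∈ W) (hyx : G y = G x) : y ∈ W :=
    hW (hE.trans (hG x) (hyx ▸ hE.symm (hG y))) hx
  have hfiber {x : X} (hx : x ∈ W) : G ⁻¹' {y | y = G x} = {x} :=
    ext fun y => ⟨fun hy => hinj (hmemW hx hy) hx hy, congrArg G⟩
  have hdecr {x : X} (hx : x ∈ W) :
      relSize ρ (G ⁻¹' {y | y = G x}) {y | y = G x} (G x) < 1 := by
    have hmul := hρ.mul (hG x) (hE.symm (hG x))
    rw [hρ.self (hE.refl x)] at hmul
    rw [hfiber hx, relSize, ofPred_eq_eq_singleton, eSize_singleton, eSize_singleton,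
      hρ.self (hE.refl _), ENNReal.ofReal_one, div_one, ENNReal.ofReal_lt_one]
    nlinarith [hlt x hx, hρ.pos (hG x)]
  refine ⟨fun x y hxy => hxy ▸ hE.refl x, hG, fun x _ => ?_, fun x hx y =>
    ⟨fun hy => hinj (hmemW hx hy) hx hy, congrArg G⟩, fun x hx => ?_,
    fun x hx => ⟨G x, hG x, hdecr hx⟩⟩
  · rw [ofPred_eq_eq_singleton]
    exact finite_singleton x
  · by_cases h : ∃ y, G y = x
    · obtain ⟨y, rfl⟩ := h
      exact (hdecr (hW (hE.symm (hG y)) hx)).le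
    · have hempty : G ⁻¹' {y | y = x} = ∅ := eq_empty_of_forall_notMem (not_exists.1 h)
      rw [hempty, relSize, eSize_empty, ENNReal.zero_div]
      exact zero_le_one

lemma isFinSubequiv (h : IsInjCompressionOn E F ρ G univ) (hF : Equivalence F)
    (hmeas : MeasurableSet {p : X × X | F p.1 p.2}) : IsFinSubequiv E F :=
  ⟨hF, hmeas, h.le, fun x => (h.finite x (mem_univ x)).subset fun _ => hF.symm⟩

lemma exists_quotCompressionOn (h : IsInjCompressionOn E F ρ G univ) (hE : IsCBER E)
    (hF : Equivalence F) (hG : Measurable G) :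
    ∃ φ : Quotient (Setoid.mk F hF) → Quotient (Setoid.mk F hF),
      Measurable φ ∧ Function.Injective φ ∧ QuotCompressionOn E ρ univ (Setoid.mk F hF) φ := by
  have hmap (x y : X) : F (G x) (G y) ↔ F x y := h.map_iff y (mem_univ y) x
  let φ : Quotient (Setoid.mk F hF) → Quotient (Setoid.mk F hF) :=
    Quotient.map G fun x y => (hmap x y).2
  have hφ {x y : X} : φ (Quotient.mk _ x) = Quotient.mk _ y ↔ F (G x) y := Quotient.eq
  have hfiber (x : X) : {y | y ∈ univ ∧ φ (Quotient.mk _ y) = Quotient.mk _ x} =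
      G ⁻¹' {y | F y x} := by
    ext y
    simp only [mem_univ, true_and, hφ, mem_ofPred_eq, mem_preimage]
  refine ⟨φ, ?_, ?_, fun x _ y hy => ?_, fun x hx => ?_, fun x hx => ?_⟩
  · exact measurable_from_quotient.2 (measurable_quotient_mk''.comp hG)
  · rintro ⟨x⟩ ⟨y⟩ hxy
    exact Quotient.sound ((hmap x y).1 (Quotient.exact hxy))
  · exact ⟨hE.trans (h.rel x) (h.le (hφ.1 hy)), mem_univ y⟩
  · rw [hfiber]
    exact h.relSize_le x hx
  · obtain ⟨y, hxy, hy⟩ := h.exists_relSize_lt x hx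
    refine ⟨y, mem_univ y, hxy, ?_⟩
    rwa [hfiber]

end IsInjCompressionOn

end InjCompression

section ColorMaxima

/-- The point `y` has the colour of `x` and larger `ρ`-weight. -/
def IsLarger (ρ : X → X → ℝ) (c : X → ℕ) (x y : X) : Prop :=
  c y = c x ∧ 1 < ρ y x

/-- The point `x` has the largest `ρ`-weight among the points of its class with its colour. -/
def IsColorMax (E : X → X → Prop) (ρ : X → X → ℝ) (c : X → ℕ) (x : X) : Prop :=
  ∀ y, E x y → ¬ IsLarger ρ c x y

variable [MeasurableSpace X] {E : X → X → Prop} {ρ : X → X → ℝ} {T : ℕ → X ≃ᵐ X} {c : X → ℕ}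
  {δ : ℝ}

lemma IsCocycle.measurableSet_isLarger (hρ : IsCocycle E ρ) (hc : Measurable c) :
    MeasurableSet {p : X × X | IsLarger ρ c p.1 p.2} :=
  (measurableSet_eq_fun (hc.comp measurable_snd) (hc.comp measurable_fst)).inter
    (measurableSet_lt measurable_const (hρ.measurable_comp measurable_snd measurable_fst))

lemma IsFeldmanMoore.measurableSet_isColorMax (hT : IsFeldmanMoore E T) (hρ : IsCocycle E ρ)
    (hc : Measurable c) : MeasurableSet {x | IsColorMax E ρ c x} :=
  hT.measurableSet_forall (f := id) measurable_id (P := fun x y => ¬ IsLarger ρ c x y)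
    (hρ.measurableSet_isLarger hc).compl

namespace IsLacunaryColoring

lemma eq_of_not_isLarger (hc : IsLacunaryColoring E ρ c δ) (hE : IsCBER E) (hρ : IsCocycle E ρ)
    {x y : X} (hxy : E x y) (hcol : c x = c y) (hx : ¬ IsLarger ρ c x y)
    (hy : ¬ IsLarger ρ c y x) : x = y := by
  have hyx_le : ρ y x ≤ 1 := not_lt.1 fun h => hx ⟨hcol.symm, h⟩
  have hxy_le : ρ x y ≤ 1 := not_lt.1 fun h => hy ⟨hcol, h⟩
  have hmul : ρ x y * ρ y x = 1 := by rw [hρ.mul hxy (hE.symm hxy), hρ.self (hE.refl x)]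
  have hone : ρ x y = 1 := by nlinarith [hρ.pos hxy]
  refine hc.eq_of_abs_log_lt hxy hcol ?_
  rw [hone, Real.log_one, abs_zero]
  exact hc.pos

lemma exists_minimalFor_isLarger (hc : IsLacunaryColoring E ρ c δ) (hE : IsCBER E)
    (hρ : IsCocycle E ρ) {x : X} (hx : ¬ IsColorMax E ρ c x) :
    ∃ y, MinimalFor (fun y => E x y ∧ IsLarger ρ c x y) (fun y => ρ y x) y := by
  let level : X → ℤ := fun y => ⌊Real.log (ρ y x) / δ⌋
  have hmono {y z : X} (hy : 1 < ρ y x) (hyz : ρ y x ≤ ρ z x) : level y ≤ level z :=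
    Int.floor_mono (div_le_div_of_nonneg_right
      (Real.log_le_log (one_pos.trans hy) hyz) hc.pos.le)
  have hnonneg {y : X} (hy : 1 < ρ y x) : 0 ≤ level y :=
    Int.floor_nonneg.2 (div_nonneg (Real.log_nonneg hy.le) hc.pos.le)
  obtain ⟨y, hy⟩ : ∃ y, E x y ∧ IsLarger ρ c x y := by
    simpa only [IsColorMax, not_forall, not_not, exists_prop] using hx
  obtain ⟨m, hm⟩ := exists_minimalFor_of_wellFoundedLT (fun y => E x y ∧ IsLarger ρ c x y)
    (fun y => (level y).toNat) ⟨y, hy⟩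
  refine ⟨m, hm.prop, fun z hz hzm => ?_⟩
  have hle : level m ≤ level z := by
    have hnat : (level m).toNat ≤ (level z).toNat := hm.le hz
    have hz_nonneg : 0 ≤ level z := hnonneg hz.2.2
    omega
  have haddress : address ρ c δ x z = address ρ c δ x m :=
    Prod.ext (hz.2.1.trans hm.prop.2.1.symm) (le_antisymm (hmono hz.2.2 hzm) hle)
  rw [hc.injOn_address hE hρ x hz.1 hm.prop.1 haddress]

lemma injOn_of_minimalFor_isLarger (hc : IsLacunaryColoring E ρ c δ) (hE : IsCBER E)
    (hρ : IsCocycle E ρ) {G : X → X} {W : Set X}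
    (hG : ∀ x ∈ W, MinimalFor (fun y => E x y ∧ IsLarger ρ c x y) (fun y => ρ y x) (G x)) :
    InjOn G W := by
  have hnot {x y : X} (hx : x ∈ W) (hy : y ∈ W) (hxy : E x y) (heq : G x = G y) :
      ¬ IsLarger ρ c x y := by
    intro hlarger
    have hle : ρ (G y) x ≤ ρ y x := heq ▸ (hG x hx).le ⟨hxy, hlarger⟩
    rw [← hρ.mul (hE.symm (hG y hy).prop.1) (hE.symm hxy)] at hle
    exact hle.not_gt (lt_mul_of_one_lt_left (hρ.pos (hE.symm hxy)) (hG y hy).prop.2.2)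
  intro x hx y hy heq
  obtain ⟨hxG, hcx, -⟩ := (hG x hx).prop
  obtain ⟨hyG, hcy, -⟩ := (hG y hy).prop
  have hxy : E x y := hE.trans hxG (heq ▸ hE.symm hyG)
  exact hc.eq_of_not_isLarger hE hρ hxy (by rw [← hcx, heq, hcy]) (hnot hx hy hxy heq)
    (hnot hy hx (hE.symm hxy) heq.symm)

lemma exists_isInjCompressionOn_compl (hc : IsLacunaryColoring E ρ c δ) (hE : IsCBER E)
    (hρ : IsCocycle E ρ) (hT : IsFeldmanMoore E T) :
    ∃ G : X → X, Measurable G ∧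
      IsInjCompressionOn E Eq ρ G {x | ∃ y, E x y ∧ IsColorMax E ρ c y}ᶜ := by
  obtain ⟨G, hG, hGE, hGmin⟩ := hT.exists_measurable_argmin (Q := IsLarger ρ c)
    (hρ.measurableSet_isLarger hc.measurable) (r := fun x y => ρ y x)
    (hρ.measurable_comp measurable_snd measurable_fst)
  have hmin (x : X) (hx : x ∈ {x | ∃ y, E x y ∧ IsColorMax E ρ c y}ᶜ) :
      MinimalFor (fun y => E x y ∧ IsLarger ρ c x y) (fun y => ρ y x) (G x) :=
    hGmin x (hc.exists_minimalFor_isLarger hE hρ fun h => hx ⟨x, hE.refl x, h⟩)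
  exact ⟨G, hG, .of_injOn hE hρ (fun x y hxy hx ⟨z, hyz, hz⟩ => hx ⟨z, hE.trans hxy hyz, hz⟩) hGE
    (hc.injOn_of_minimalFor_isLarger hE hρ hmin) fun x hx => (hmin x hx).prop.2.2⟩

lemma exists_measurable_basepoint (hc : IsLacunaryColoring E ρ c δ) (hE : IsCBER E)
    (hρ : IsCocycle E ρ) (hT : IsFeldmanMoore E T) :
    ∃ s : X → X, Measurable s ∧ (∀ x, E x (s x)) ∧
      ∀ x ∈ {x | ∃ y, E x y ∧ IsColorMax E ρ c y}, ∀ y, E x y → s x = s y := by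
  obtain ⟨s, hs, hsE, hsmin⟩ := hT.exists_measurable_argmin (Q := fun _ y => IsColorMax E ρ c y)
    (measurable_snd (hT.measurableSet_isColorMax hρ hc.measurable)) (r := fun _ y => c y)
    (hc.measurable.comp measurable_snd)
  have hmin {x : X} (hx : ∃ y, E x y ∧ IsColorMax E ρ c y) :
      MinimalFor (fun y => E x y ∧ IsColorMax E ρ c y) c (s x) :=
    hsmin x (exists_minimalFor_of_wellFoundedLT _ _ hx)
  refine ⟨s, hs, hsE, fun x ⟨z, hxz, hz⟩ y hxy => ?_⟩
  have hx := hmin ⟨z, hxz, hz⟩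
  have hy := hmin ⟨z, hE.trans (hE.symm hxy) hxz, hz⟩
  have hsxy : E (s x) (s y) := hE.trans (hE.symm (hsE x)) (hE.trans hxy (hsE y))
  have hcol : c (s x) = c (s y) := le_antisymm (hx.le ⟨hE.trans hxy (hsE y), hy.prop.2⟩)
    (hy.le ⟨hE.trans (hE.symm hxy) (hsE x), hx.prop.2⟩)
  exact hc.eq_of_not_isLarger hE hρ hsxy hcol (hx.prop.2 _ hsxy) (hy.prop.2 _ (hE.symm hsxy))

end IsLacunaryColoring

end ColorMaxima

section InfiniteClasses

variable [MeasurableSpace X] {E : X → X → Prop} {ρ : X → X → ℝ} {T : ℕ → X ≃ᵐ X}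

lemma IsInjCompressionOn.of_shift (hE : IsCBER E) {W : Set X} (hW : EInvariant E W) {b : X → ℕ}
    {G : X → X} (hG : ∀ x, E x (G x)) (hbG : ∀ x ∈ W, b (G x) = b x + 1)
    (hfin : ∀ x ∈ W, ∀ k, {y | E x y ∧ b y = k}.Finite)
    (hle : ∀ x ∈ W, ∀ k,
      eSize ρ {y | E x y ∧ b y = k} x ≤ eSize ρ {y | E x y ∧ b y = k + 1} x)
    (hzero : ∀ x ∈ W, ∃ y, E x y ∧ b y = 0) :
    IsInjCompressionOn E (fun x y => E x y ∧ b x = b y) ρ G W := by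
  have hrel {x y : X} : E (G y) x ↔ E x y :=
    ⟨fun h => hE.symm (hE.trans (hG y) h), fun h => hE.symm (hE.trans h (hG y))⟩
  have hfiber {x : X} (hx : x ∈ W) :
      G ⁻¹' {y | E y x ∧ b y = b x} = {y | E x y ∧ b y + 1 = b x} := by
    ext y
    rw [mem_preimage, mem_ofPred_eq, mem_ofPred_eq, hrel]
    exact and_congr_right fun hxy => by rw [hbG y (hW hxy hx)]
  have hclass (x : X) : {y | E y x ∧ b y = b x} = {y | E x y ∧ b y = b x} :=
    ext fun y => and_congr_left fun _ => ⟨hE.symm, hE.symm⟩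
  have hfiber_zero {x : X} (hx : x ∈ W) (hb : b x = 0) : G ⁻¹' {y | E y x ∧ b y = b x} = ∅ := by
    rw [hfiber hx, hb]
    exact eq_empty_of_forall_notMem fun y hy => (b y).succ_ne_zero hy.2
  refine ⟨fun x y h => h.1, hG, fun x hx => ?_, fun x hx y => ?_, fun x hx => ?_, fun x hx => ?_⟩
  · exact hclass x ▸ hfin x hx (b x)
  · refine ⟨fun ⟨hEG, hbeq⟩ => ?_, fun ⟨hyx, hbeq⟩ => ⟨?_, ?_⟩⟩
    · have hyx : E y x := hE.trans (hG y) (hE.trans hEG (hE.symm (hG x)))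
      rw [hbG x hx, hbG y (hW (hE.symm hyx) hx), Nat.succ_inj] at hbeq
      exact ⟨hyx, hbeq⟩
    · exact hE.trans (hE.symm (hG y)) (hE.trans hyx (hG x))
    · rw [hbG x hx, hbG y (hW (hE.symm hyx) hx), hbeq]
  · refine ENNReal.div_le_of_le_mul ?_
    rw [one_mul, hfiber hx, hclass]
    cases hb : b x with
    | zero => simp only [Nat.succ_ne_zero, and_false, ofPred_false, eSize_empty, zero_le]
    | succ k => simpa only [Nat.succ_inj] using hle x hx k
  · obtain ⟨y, hxy, hy⟩ := hzero x hx
    refine ⟨y, hxy, ?_⟩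
    rw [hfiber_zero (hW hxy hx) hy, relSize, eSize_empty, ENNReal.zero_div]
    exact one_pos

lemma exists_isInjCompressionOn_of_basepoint [MeasurableEq X] (hE : IsCBER E)
    (hρ : IsCocycle E ρ) (hT : IsFeldmanMoore E T) {W : Set X} (hW : EInvariant E W) {s : X → X}
    (hs : Measurable s) (hsE : ∀ x, E x (s x)) (hsW : ∀ x ∈ W, ∀ y, E x y → s x = s y)
    {code : X → ℕ} (hcode : Measurable code) (hinj : ∀ x ∈ W, InjOn code {y | E x y})
    (hinf : ∀ x ∈ W, eSize ρ {y | E x y} (s x) = ⊤) :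
    ∃ b : X → ℕ, Measurable b ∧ ∃ G : X → X, Measurable G ∧
      IsInjCompressionOn E (fun x y => E x y ∧ b x = b y) ρ G W := by
  let b : X → ℕ := fun x => blockIndex ρ code {y | E x y} (s x) x
  have hb : Measurable b := by
    refine measurable_doublingBlock (fun n => ?_) hcode
    exact hT.measurable_eSize hρ (R := fun _ y => code y < n)
      (measurable_snd (hcode measurableSet_Iio)) hs
  obtain ⟨G, hG, hGE, hGb⟩ := hT.exists_selector (P := fun x y => b y = b x + 1)
    (measurableSet_eq_fun (hb.comp measurable_snd) ((hb.comp measurable_fst).add_const 1))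
  have hbW {x : X} (hx : x ∈ W) (k : ℕ) : {y | E x y ∧ b y = k} =
      {y | y ∈ {y | E x y} ∧ blockIndex ρ code {y | E x y} (s x) y = k} := by
    refine ext fun y => and_congr_right fun (hxy : E x y) => ?_
    have hclass : {z | E y z} = {z | E x z} :=
      ext fun z => ⟨hE.trans hxy, hE.trans (hE.symm hxy)⟩
    simp only [b, hclass, hsW x hx y hxy]
  have hblock {x : X} (hx : x ∈ W) (k : ℕ) : ∃ y, E x y ∧ b y = k := by
    obtain ⟨y, hy⟩ := exists_blockIndex_eq (hinj x hx) (hinf x hx) k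
    exact ⟨y, ((hbW hx k).symm ▸ hy : y ∈ {y | E x y ∧ b y = k})⟩
  refine ⟨b, hb, G, hG, .of_shift hE hW hGE (fun x hx => ?_) (fun x hx k => ?_) (fun x hx k => ?_)
    fun x hx => hblock hx 0⟩
  · obtain ⟨y, hxy, hy⟩ := hblock hx (b x + 1)
    exact hGb x y hxy hy
  · exact hbW hx k ▸ finite_block (hinj x hx) (hinf x hx) k
  · have hbase (k : ℕ) : eSize ρ {y | E x y ∧ b y = k} (s x) * ENNReal.ofReal (ρ (s x) x) =
        eSize ρ {y | E x y ∧ b y = k} x :=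
      hρ.eSize_mul (fun y hy => hE.trans (hE.symm hy.1) (hsE x)) (hE.symm (hsE x))
    rw [← hbase, ← hbase, hbW hx, hbW hx]
    exact mul_le_mul_left (eSize_block_le_succ (hinj x hx) (hinf x hx) k) _

end InfiniteClasses

section Gluing

variable [MeasurableSpace X] {E : X → X → Prop} {ρ : X → X → ℝ}

lemma exists_isInjCompressionOn_univ [MeasurableEq X] (hE : IsCBER E) {B : Set X}
    (hB : MeasurableSet B) (hBE : EInvariant E B) {s : X → X} (hs : Measurable s)
    (hsB : ∀ x ∈ B, ∀ y, E x y → s x = s y) {b : X → ℕ} (hb : Measurable b) {G₁ G₂ : X → X}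
    (hG₁ : Measurable G₁) (hG₂ : Measurable G₂) (h₁ : IsInjCompressionOn E Eq ρ G₁ Bᶜ)
    (h₂ : IsInjCompressionOn E (fun x y => E x y ∧ b x = b y) ρ G₂ B) :
    ∃ F : X → X → Prop, Equivalence F ∧ MeasurableSet {p : X × X | F p.1 p.2} ∧
      ∃ G, Measurable G ∧ IsInjCompressionOn E F ρ G univ := by
  classical
  -- The base point is constant on the classes in `B`; replacing it by the identity off `B` cuts the
  -- remaining classes into singletons.
  let base : X → X := B.piecewise s id
  have hbase : Measurable base := hs.piecewise hB measurable_id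
  have hBcE : EInvariant E Bᶜ := fun x y hxy hx hy => hx (hBE (hE.symm hxy) hy)
  have hFB (x : X) (hx : x ∈ B) (y : X) :
      E y x ∧ b y = b x ∧ base y = base x ↔ E y x ∧ b y = b x := by
    refine and_congr_right fun hyx => and_iff_left ?_
    have hy : y ∈ B := hBE (hE.symm hyx) hx
    simp only [base, piecewise_eq_of_mem _ _ _ hx, piecewise_eq_of_mem _ _ _ hy, hsB y hy x hyx]
  have hFBc (x : X) (hx : x ∈ Bᶜ) (y : X) : E y x ∧ b y = b x ∧ base y = base x ↔ y = x := by
    refine ⟨fun ⟨hyx, _, heq⟩ => ?_, fun hyx => hyx ▸ ⟨hE.refl y, rfl, rfl⟩⟩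
    have hy : y ∈ Bᶜ := hBcE (hE.symm hyx) hx
    simpa only [base, piecewise_eq_of_notMem _ _ _ hx, piecewise_eq_of_notMem _ _ _ hy, id]
      using heq
  have hGE (x : X) : E x (B.piecewise G₂ G₁ x) := by
    by_cases hx : x ∈ B
    · rw [piecewise_eq_of_mem _ _ _ hx]
      exact h₂.rel x
    · rw [piecewise_eq_of_notMem _ _ _ hx]
      exact h₁.rel x
  refine ⟨fun x y => E x y ∧ b x = b y ∧ base x = base y,
    ⟨fun x => ⟨hE.refl x, rfl, rfl⟩, fun h => ⟨hE.symm h.1, h.2.1.symm, h.2.2.symm⟩,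
      fun h h' => ⟨hE.trans h.1 h'.1, h.2.1.trans h'.2.1, h.2.2.trans h'.2.2⟩⟩,
    hE.2.1.inter ((measurableSet_eq_fun (hb.comp measurable_fst) (hb.comp measurable_snd)).inter
      (measurableSet_eq_fun (hbase.comp measurable_fst) (hbase.comp measurable_snd))),
    B.piecewise G₂ G₁, hG₂.piecewise hB hG₁, union_compl_self B ▸ .union ?_ ?_⟩
  · exact h₂.congr hE hBE (fun _ _ => And.left) hGE hFB (piecewise_eqOn B G₂ G₁)
  · exact h₁.congr hE hBcE (fun _ _ => And.left) hGE hFBc (piecewise_eqOn_compl B G₂ G₁)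

end Gluing

lemma IsLacunaryColoring.exists_quotCompressionOn [MeasurableSpace X] [MeasurableEq X]
    {E : X → X → Prop} {ρ : X → X → ℝ} {T : ℕ → X ≃ᵐ X} {c : X → ℕ} {δ : ℝ}
    (hc : IsLacunaryColoring E ρ c δ) (hE : IsCBER E) (hρ : IsCocycle E ρ)
    (hT : IsFeldmanMoore E T) (hinf : ∀ x, eSize ρ {y | E x y} x = ⊤) :
    ∃ (F : X → X → Prop) (hF : Equivalence F), IsFinSubequiv E F ∧
      ∃ φ : Quotient (Setoid.mk F hF) → Quotient (Setoid.mk F hF),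
        Measurable φ ∧ Function.Injective φ ∧ QuotCompressionOn E ρ univ (Setoid.mk F hF) φ := by
  let B : Set X := {x | ∃ y, E x y ∧ IsColorMax E ρ c y}
  have hB : MeasurableSet B := hT.measurableSet_exists (f := id) measurable_id
    (P := fun _ y => IsColorMax E ρ c y)
    (measurable_snd (hT.measurableSet_isColorMax hρ hc.measurable))
  have hBE : EInvariant E B := fun x y hxy ⟨z, hxz, hz⟩ => ⟨z, hE.trans (hE.symm hxy) hxz, hz⟩
  obtain ⟨G₁, hG₁, h₁⟩ := hc.exists_isInjCompressionOn_compl hE hρ hT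
  obtain ⟨s, hs, hsE, hsB⟩ := hc.exists_measurable_basepoint hE hρ hT
  have hclass (x : X) : {y | E x y} = {y | E (s x) y} :=
    ext fun y => ⟨hE.trans (hE.symm (hsE x)), hE.trans (hsE x)⟩
  let code : X → ℕ := fun x => Encodable.encode (address ρ c δ (s x) x)
  have hcode : Measurable code :=
    (Measurable.of_discrete (f := Encodable.encode)).comp
      ((hc.measurable_address hρ).comp (hs.prodMk measurable_id))
  have hinj (x : X) (hx : x ∈ B) : InjOn code {y | E x y} := by
    intro y hy z hz hyz
    refine hc.injOn_address hE hρ (s x) (hclass x ▸ hy) (hclass x ▸ hz) ?_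
    have haddress := Encodable.encode_injective hyz
    rwa [← hsB x hx y hy, ← hsB x hx z hz] at haddress
  obtain ⟨b, hb, G₂, hG₂, h₂⟩ := exists_isInjCompressionOn_of_basepoint hE hρ hT hBE hs hsE hsB
    hcode hinj fun x _ => hclass x ▸ hinf (s x)
  obtain ⟨F, hF, hmeas, G, hG, hcomp⟩ :=
    exists_isInjCompressionOn_univ hE hB hBE hs hsB hb hG₁ hG₂ h₁ h₂
  exact ⟨F, hF, hcomp.isFinSubequiv hF hmeas, hcomp.exists_quotCompressionOn hE hF hG⟩

/-- For smooth Borel cocycles: either there is an injective Borel compression of the quotient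
of `ρ` by a finite Borel subequivalence relation of `E`, or there is a `ρ`-invariant Borel
probability measure -- and not both. -/
theorem stmt3 [MeasurableSpace X] [StandardBorelSpace X]
    (E : X → X → Prop) (hE : IsCBER E)
    (ρ : X → X → ℝ) (hρ : IsCocycle E ρ) (hsm : Smooth E ρ) :
    Xor'
      (∃ (F : X → X → Prop) (hF : Equivalence F), IsFinSubequiv E F ∧
        ∃ φ : Quotient (Setoid.mk F hF) → Quotient (Setoid.mk F hF),
          Measurable φ ∧ Function.Injective φ ∧
          QuotCompressionOn E ρ Set.univ (Setoid.mk F hF) φ)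
      (∃ μ : Measure X, IsProbabilityMeasure μ ∧ IsInvariant E ρ μ) := by
  obtain ⟨c, δ, hc⟩ := hsm.exists_isLacunaryColoring hρ
  obtain ⟨h, hmeas, hrel, hcover⟩ := hc.exists_enumeration hE hρ
  obtain ⟨T, hT⟩ := hE.exists_isFeldmanMoore_of_enumeration hmeas hrel hcover
  refine (xor_iff_or_and_not_and _ _).2 ⟨?_, ?_⟩
  · by_cases hfin : ∃ x, eSize ρ {y | E x y} x ≠ ⊤
    · obtain ⟨x, hx⟩ := hfin
      exact .inr (exists_isProbabilityMeasure_isInvariant hE hρ hx)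
    · push Not at hfin
      exact .inl (hc.exists_quotCompressionOn hE hρ hT hfin)
  · rintro ⟨⟨F, hF, hfin, φ, hφ, -, hcomp⟩, μ, hprob, hμ⟩
    have hzero := hμ.measure_univ_eq_zero_of_quotCompressionOn hE hT hρ hfin hφ hcomp
    exact zero_ne_one (hzero.symm.trans hprob.measure_univ)

end CocycleNadkarni
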